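/- Fix K₀ > 0 and β > 0, and for x ≠ 0 small let θ(x) ∈ (0, e^{-1}) be defined by the relation (K₀/4)√(θ(x) |log θ(x)|) = |x|. Then, as x → 0: (i) H*(x) ∼ k̂(1) θ(x)^{1/(β+1)}, and (ii) ∇H*(x) ∼ (8/((β+1)K₀)) (x/|x|) (k̂(1)/√|log θ(x)|) θ(x)^{1/(β+1) − 1/2}, where k̂(1) = ((β+1)²K₀²/(64β))^{1/(β+1)}. -/

import Mathlib

/-!
Write `γ = 1/(β+1)`, `t = ‖x‖` and `L = |log θ|`. Since `θ < e⁻¹` forces `L ≥ 1`, the relation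
`θ L = (4t/K₀)²` gives `θ → 0`, hence `L → ∞`. Taking its logarithm,
`-2 log t = L - (2 log (K₀/4) + log L)`, so `L / (2|log t|) → 1` because `log L = o(L)`
(`tendsto_logRatio`). Substituting `t² = K₀² θ L / 16` in the profile gives the exact identity
`H* = (L / (2|log t|))^γ · k̂(1) θ^γ` (`Hstar_eq`), which is (i).

For the gradient, differentiating `H*` as a function of `‖x‖²` gives
`∇H*(x) = γ H*(x) (2 + 1/|log t|) / t² • x` (`hasGradientAt_Hstar`). Combined with the identity for
`H*` and `t = (K₀/4) √(θ L)`, this is the claimed gradient times the scalar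
`(L / (2|log t|))^γ (1 + 1/(2|log t|))`, which tends to `1`.
-/

open scoped Topology
open Filter Set Asymptotics

noncomputable section

/-- The final extinction profile near the origin. -/
def Hstar {N : ℕ} (β : ℝ) (x : EuclideanSpace ℝ (Fin N)) : ℝ :=
  ((β + 1) ^ 2 / (8 * β) * ‖x‖ ^ 2 / |Real.log ‖x‖|) ^ ((1:ℝ) / (β + 1))

/-- A scalar multiple of `g` whose scalar tends to `1` is asymptotic to `g`. -/
lemma isLittleO_sub_of_eq_smul {α E : Type*} [NormedAddCommGroup E] [NormedSpace ℝ E]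
    {l : Filter α} {f g : α → E} {S : α → ℝ} (hS : Tendsto S l (𝓝 1))
    (h : ∀ᶠ x in l, f x = S x • g x) : (fun x => f x - g x) =o[l] g := by
  have h1 : (fun x => S x - 1) =o[l] (fun _ => (1:ℝ)) := by
    rw [isLittleO_one_iff]
    simpa using hS.sub_const 1
  have h2 := h1.smul_isBigO (isBigO_refl g l)
  refine h2.congr' ?_ ?_
  · filter_upwards [h] with x hx
    rw [hx, sub_smul, one_smul]
  · exact Eventually.of_forall fun x => one_smul ℝ _

/-- Away from the origin and inside the unit ball, the gradient of the profile is radial, with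
an explicit coefficient. -/
lemma hasGradientAt_Hstar {N : ℕ} {β : ℝ} (hβ : 0 < β) {x : EuclideanSpace ℝ (Fin N)}
    (h0 : 0 < ‖x‖) (h1 : ‖x‖ < 1) :
    HasGradientAt (Hstar β (N := N))
      (((1:ℝ) / (β + 1) * Hstar β x * (2 + 1 / |Real.log ‖x‖|) / ‖x‖ ^ 2) • x) x := by
  have hlog : Real.log ‖x‖ < 0 := Real.log_neg h0 h1
  set γ : ℝ := 1 / (β + 1) with hγ
  set c : ℝ := (β + 1) ^ 2 / (8 * β) with hc
  have hcpos : 0 < c := by positivity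
  -- In the variable `s = ‖y‖ ^ 2`, with `log ‖y‖ = log s / 2`, the norm is no longer singular.
  have hform : ∀ y : EuclideanSpace ℝ (Fin N),
      Hstar β y = (2 * c * ‖y‖ ^ 2 / |Real.log (‖y‖ ^ 2)|) ^ γ := by
    intro y
    unfold Hstar
    rw [Real.log_pow, abs_mul]
    congr 1
    rw [show |((2:ℕ):ℝ)| = 2 by norm_num, mul_assoc, mul_div_mul_left _ _ two_ne_zero]
  have hs : 0 < ‖x‖ ^ 2 := by positivity
  have hls : Real.log (‖x‖ ^ 2) = 2 * Real.log ‖x‖ := by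
    rw [Real.log_pow]; norm_num
  have hls0 : Real.log (‖x‖ ^ 2) < 0 := by rw [hls]; linarith
  have hu : HasDerivAt (fun s : ℝ => 2 * c * s / (-Real.log s))
      ((2 * c * 1 * (-Real.log (‖x‖ ^ 2)) - 2 * c * ‖x‖ ^ 2 * (-(‖x‖ ^ 2)⁻¹))
        / (-Real.log (‖x‖ ^ 2)) ^ 2) (‖x‖ ^ 2) :=
    ((hasDerivAt_id (‖x‖ ^ 2)).const_mul (2 * c)).div (Real.hasDerivAt_log hs.ne').neg
      (by linarith)
  have hupos : 0 < 2 * c * ‖x‖ ^ 2 / (-Real.log (‖x‖ ^ 2)) :=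
    div_pos (by positivity) (by linarith)
  have hφ := hu.rpow_const (p := γ) (Or.inl hupos.ne')
  have hφ' := hφ.congr_of_eventuallyEq (f₁ := fun s : ℝ => (2 * c * s / |Real.log s|) ^ γ) (by
    have : ∀ᶠ s in 𝓝 (‖x‖ ^ 2), Real.log s < 0 :=
      (Real.continuousAt_log hs.ne').eventually_lt continuousAt_const hls0
    filter_upwards [this] with s hs'
    rw [abs_of_neg hs'])
  have hcomp := hφ'.comp_hasFDerivAt x (hasStrictFDerivAt_norm_sq x).hasFDerivAt
  have hH : Hstar β x = (2 * c * ‖x‖ ^ 2 / (-Real.log (‖x‖ ^ 2))) ^ γ := by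
    rw [hform, abs_of_neg hls0]
  rw [hasGradientAt_iff_hasFDerivAt]
  have hfun : (Hstar β (N := N)) =
      (fun s : ℝ => (2 * c * s / |Real.log s|) ^ γ) ∘ (fun y => ‖y‖ ^ 2) := by
    funext y; exact hform y
  rw [hH, hfun]
  refine hcomp.congr_fderiv ?_
  rw [Real.rpow_sub_one hupos.ne', hls, abs_of_neg hlog]
  generalize (2 * c * ‖x‖ ^ 2 / -(2 * Real.log ‖x‖)) ^ γ = P
  ext y
  simp only [InnerProductSpace.toDual_apply_apply, inner_smul_left, _root_.smul_apply,
    innerSL_apply_apply, smul_eq_mul, nsmul_eq_mul, RCLike.conj_to_real]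
  generalize inner ℝ x y = z
  generalize Real.log ‖x‖ = l at *
  have hl0 := hlog.ne
  push_cast
  field_simp
  ring

/-- The relation defining `θ`, squared. -/
lemma sq_relation {K₀ T t : ℝ} (hT : 0 < T)
    (h : K₀ / 4 * Real.sqrt (T * |Real.log T|) = t) :
    t ^ 2 = K₀ ^ 2 / 16 * (T * |Real.log T|) := by
  rw [← h, mul_pow, Real.sq_sqrt (by positivity)]
  ring

lemma one_lt_abs_log {T : ℝ} (hT : 0 < T) (hT' : T < Real.exp (-1)) : 1 < |Real.log T| := by
  have := (Real.log_lt_iff_lt_exp hT).2 hT'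
  rw [abs_of_neg (by linarith)]
  linarith

/-- Along any filter on which `t → 0`, the solution `T` of the defining relation satisfies
`|log T| ∼ 2 |log t|`. -/
lemma tendsto_logRatio {α : Type*} {l : Filter α} {K₀ : ℝ} (hK₀ : 0 < K₀) {T t : α → ℝ}
    (ht : Tendsto t l (𝓝 0))
    (h : ∀ᶠ x in l, 0 < t x ∧ t x < 1 ∧ 0 < T x ∧ T x < Real.exp (-1) ∧
      K₀ / 4 * Real.sqrt (T x * |Real.log (T x)|) = t x) :
    Tendsto (fun x => |Real.log (T x)| / (2 * |Real.log (t x)|)) l (𝓝 1) := by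
  have hT0 : Tendsto T l (𝓝[>] 0) := by
    refine tendsto_nhdsWithin_iff.2 ⟨?_, h.mono fun x hx => hx.2.2.1⟩
    have hb : Tendsto (fun x => 16 / K₀ ^ 2 * t x ^ 2) l (𝓝 0) := by
      simpa using (ht.pow 2).const_mul (16 / K₀ ^ 2)
    refine squeeze_zero' (h.mono fun x hx => hx.2.2.1.le) ?_ hb
    filter_upwards [h] with x ⟨h0, h1, h2, h3, h4⟩
    have hL := one_lt_abs_log h2 h3
    rw [sq_relation h2 h4]
    field_simp
    nlinarith
  have hL : Tendsto (fun x => |Real.log (T x)|) l atTop :=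
    tendsto_abs_atBot_atTop.comp (Real.tendsto_log_nhdsGT_zero.comp hT0)
  have hq : Tendsto (fun L : ℝ => 1 - (2 * Real.log (K₀ / 4) / L + Real.log L / L))
      atTop (𝓝 1) := by
    have h1 : Tendsto (fun L : ℝ => 2 * Real.log (K₀ / 4) / L) atTop (𝓝 0) :=
      tendsto_id.const_div_atTop _
    have h2 : Tendsto (fun L : ℝ => Real.log L / L) atTop (𝓝 0) :=
      Real.isLittleO_log_id_atTop.tendsto_div_nhds_zero
    simpa using (h1.add h2).const_sub 1
  have hq' := (hq.comp hL).inv₀ one_ne_zero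
  rw [inv_one] at hq'
  refine hq'.congr' ?_
  filter_upwards [h] with x ⟨h0, h1, h2, h3, h4⟩
  have hL := one_lt_abs_log h2 h3
  have hLpos : 0 < |Real.log (T x)| := by linarith
  have hlogT : Real.log (T x) = -|Real.log (T x)| := by
    have := (Real.log_lt_iff_lt_exp h2).2 h3
    rw [abs_of_neg (by linarith), neg_neg]
  have hlt : Real.log (t x) < 0 := Real.log_neg h0 h1
  have key : 2 * Real.log (t x) =
      2 * Real.log (K₀ / 4) + (-|Real.log (T x)| + Real.log |Real.log (T x)|) := by
    have e := congrArg Real.log (sq_relation h2 h4)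
    rw [show K₀ ^ 2 / 16 = (K₀ / 4) ^ 2 by ring, Real.log_mul (by positivity) (by positivity),
      Real.log_mul h2.ne' hLpos.ne', Real.log_pow, Real.log_pow] at e
    push_cast at e
    linarith
  have : 1 - (2 * Real.log (K₀ / 4) / |Real.log (T x)| +
      Real.log |Real.log (T x)| / |Real.log (T x)|) =
      (2 * |Real.log (t x)|) / |Real.log (T x)| := by
    rw [abs_of_neg hlt]
    rw [eq_div_iff hLpos.ne', sub_mul, add_mul, div_mul_cancel₀ _ hLpos.ne',
      div_mul_cancel₀ _ hLpos.ne']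
    linarith
  simp only [Function.comp_apply]
  rw [this, inv_div]

/-- The profile is exactly a power of the logarithmic ratio times `k̂(1) θ ^ (1 / (β + 1))`. -/
lemma Hstar_eq {N : ℕ} {K₀ β T : ℝ} (hβ : 0 < β)
    {x : EuclideanSpace ℝ (Fin N)} (hT : 0 < T)
    (h : K₀ / 4 * Real.sqrt (T * |Real.log T|) = ‖x‖) :
    Hstar β x = (|Real.log T| / (2 * |Real.log ‖x‖|)) ^ ((1:ℝ) / (β + 1)) *
      (((β + 1) ^ 2 * K₀ ^ 2 / (64 * β)) ^ ((1:ℝ) / (β + 1)) * T ^ ((1:ℝ) / (β + 1))) := by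
  rw [← Real.mul_rpow (by positivity) hT.le, ← Real.mul_rpow (by positivity) (by positivity)]
  unfold Hstar
  rw [sq_relation hT h]
  congr 1
  ring

/-- Lemma 3.11: asymptotics of the final profile and its gradient in terms of
`θ(x)`, defined by `(K₀/4)√(θ(x)|log θ(x)|) = |x|`.  Here
`k̂(1) = ((β+1)²K₀²/(64β))^{1/(β+1)}`. -/
theorem final_profile_asymptotics_via_theta
    {N : ℕ} (hN : 1 ≤ N) (K₀ β : ℝ) (hK₀ : 0 < K₀) (hβ : 0 < β)
    (θ : EuclideanSpace ℝ (Fin N) → ℝ)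
    (hθ : ∃ r > (0:ℝ), ∀ x : EuclideanSpace ℝ (Fin N), 0 < ‖x‖ → ‖x‖ < r →
      0 < θ x ∧ θ x < Real.exp (-1) ∧
      K₀ / 4 * Real.sqrt (θ x * |Real.log (θ x)|) = ‖x‖) :
    -- (i)  H*(x) ∼ k̂(1) θ(x)^{1/(β+1)}
    ((fun x : EuclideanSpace ℝ (Fin N) =>
        Hstar β x - ((β + 1) ^ 2 * K₀ ^ 2 / (64 * β)) ^ ((1:ℝ) / (β + 1)) *
          (θ x) ^ ((1:ℝ) / (β + 1)))
      =o[𝓝[≠] (0 : EuclideanSpace ℝ (Fin N))]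
        fun x => ((β + 1) ^ 2 * K₀ ^ 2 / (64 * β)) ^ ((1:ℝ) / (β + 1)) *
          (θ x) ^ ((1:ℝ) / (β + 1))) ∧
    -- (ii) ∇H*(x) ∼ (8/((β+1)K₀)) (x/|x|) (k̂(1)/√|log θ(x)|) θ(x)^{1/(β+1)−1/2}
    ((fun x : EuclideanSpace ℝ (Fin N) =>
        gradient (Hstar β (N := N)) x -
          (8 / ((β + 1) * K₀) * ((β + 1) ^ 2 * K₀ ^ 2 / (64 * β)) ^ ((1:ℝ) / (β + 1)) *
              (Real.sqrt |Real.log (θ x)|)⁻¹ *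
              (θ x) ^ ((1:ℝ) / (β + 1) - 1/2) / ‖x‖) • x)
      =o[𝓝[≠] (0 : EuclideanSpace ℝ (Fin N))]
        fun x =>
          (8 / ((β + 1) * K₀) * ((β + 1) ^ 2 * K₀ ^ 2 / (64 * β)) ^ ((1:ℝ) / (β + 1)) *
              (Real.sqrt |Real.log (θ x)|)⁻¹ *
              (θ x) ^ ((1:ℝ) / (β + 1) - 1/2) / ‖x‖) • x) := by
  obtain ⟨r, hr, hθ⟩ := hθ
  have ht : Tendsto (fun x : EuclideanSpace ℝ (Fin N) => ‖x‖) (𝓝[≠] 0) (𝓝[>] 0) :=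
    tendsto_norm_nhdsNE_zero
  have ht0 := ht.mono_right nhdsWithin_le_nhds
  have hev : ∀ᶠ x in 𝓝[≠] (0 : EuclideanSpace ℝ (Fin N)), 0 < ‖x‖ ∧ ‖x‖ < 1 ∧ 0 < θ x ∧
      θ x < Real.exp (-1) ∧ K₀ / 4 * Real.sqrt (θ x * |Real.log (θ x)|) = ‖x‖ := by
    filter_upwards [ht.eventually self_mem_nhdsWithin, ht0.eventually_lt_const one_pos,
      ht0.eventually_lt_const hr] with x h0 h1 h2
    exact ⟨h0, h1, hθ x h0 h2⟩
  have hratio := (tendsto_logRatio hK₀ ht0 hev).rpow_const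
    (p := (1:ℝ) / (β + 1)) (Or.inl one_ne_zero)
  rw [Real.one_rpow] at hratio
  refine ⟨isLittleO_sub_of_eq_smul hratio ?_, ?_⟩
  · filter_upwards [hev] with x ⟨_, _, h2, _, h4⟩
    rw [smul_eq_mul, Hstar_eq hβ h2 h4]
  have hcorr : Tendsto (fun x : EuclideanSpace ℝ (Fin N) => 1 + 1 / 2 / |Real.log ‖x‖|)
      (𝓝[≠] 0) (𝓝 1) := by
    have h1 : Tendsto (fun x : EuclideanSpace ℝ (Fin N) => |Real.log ‖x‖|) (𝓝[≠] 0) atTop :=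
      tendsto_abs_atBot_atTop.comp (Real.tendsto_log_nhdsGT_zero.comp ht)
    simpa using (h1.const_div_atTop (1 / 2)).const_add 1
  have hS := hratio.mul hcorr
  rw [one_mul] at hS
  refine isLittleO_sub_of_eq_smul hS ?_
  filter_upwards [hev] with x ⟨h0, h1, h2, h3, h4⟩
  have hL := one_lt_abs_log h2 h3
  have hlt : 0 < |Real.log ‖x‖| := abs_pos.2 (Real.log_neg h0 h1).ne
  rw [(hasGradientAt_Hstar hβ h0 h1).gradient, smul_smul, Hstar_eq hβ h2 h4,
    Real.rpow_sub h2, ← Real.sqrt_eq_rpow]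
  congr 1
  rw [Real.sqrt_mul h2.le] at h4
  have hsT : 0 < Real.sqrt (θ x) := Real.sqrt_pos.2 h2
  have hsL : 0 < Real.sqrt |Real.log (θ x)| := Real.sqrt_pos.2 (by linarith)
  generalize (|Real.log (θ x)| / (2 * |Real.log ‖x‖|)) ^ ((1:ℝ) / (β + 1)) = R
  generalize ((β + 1) ^ 2 * K₀ ^ 2 / (64 * β)) ^ ((1:ℝ) / (β + 1)) = k
  generalize θ x ^ ((1:ℝ) / (β + 1)) = p
  generalize |Real.log ‖x‖| = m at *
  generalize Real.sqrt (θ x) = a at *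
  generalize Real.sqrt |Real.log (θ x)| = b at *
  rw [← h4]
  field_simp
  ring
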